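/- Let c = (c_{ij}) be real numbers indexed by the diagonals of the N-gon, extended by c_{ij} = 0 for edges and c_{ii} = 0. The polytope F_c^∅ is a Stasheff polytope (i.e. F_c^{T_2} ⊆ F_c^{T_1} whenever T_1 ⊆ T_2 are partial triangulations) if and only if c_{ij} + c_{kl} ≥ max(c_{ik} + c_{jl}, c_{kj} + c_{il}) for every quadruple of distinct vertices i, k, j, l in clockwise order. -/

import Mathlib

/-!
Suppose first that `c` satisfies the inequalities, and let `x` lie in the face of `T₂ ⊇ T₁`. Then
`x ≤ c` holds on *every* segment (`le_of_mem_face`), by induction on the number of diagonals of `T₂`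
crossing it. If `{p q}` crosses `{k l} ∈ T₂`, the four sides of the quadrilateral `p, k, q, l` cross
fewer diagonals of `T₂`, so the Plücker relation for `x`, the equality `x k l = c k l` and the
inequality for `c` give `x p q ≤ c p q`.

Conversely, each half of the maximum is a Monge inequality for `c`, hence it telescopes (`monge`) from
the case of quadruples `o, o + 1, j, j + 1`. For those, take the triangulation `dblTri` made of
the diagonals from `o + 1` to the vertices up to `j` and from `o` to the vertices from `j` on. There
is a tropical point `x` equal to `c` on it: points with prescribed fan coordinates at `o` are given
by an explicit formula (`fanPt`), and the fan coordinates taking the required values on the diagonals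
at `o + 1` are found by a downward recursion (`dblCoord`). As the triangulation is maximal, `x` lies
in its face, so the Stasheff property gives `x ≤ c` on `{o + 1, j + 1}`, the flip of `{o, j}`; by the
Plücker relation this is the desired inequality.
-/

open Finset

/-- Vertices `i, j` of the `(n+3)`-gon (labelled by `ZMod (n+3)`) are adjacent,
i.e. the segment `{i j}` is an edge. -/
def IsEdge (n : ℕ) (i j : ZMod (n + 3)) : Prop := i = j + 1 ∨ j = i + 1

/-- The segment `{i j}` is a diagonal of the `(n+3)`-gon. -/
def IsDiag (n : ℕ) (i j : ZMod (n + 3)) : Prop := i ≠ j ∧ ¬ IsEdge n i j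

/-- The distinct vertices `p, q, r, s` are in clockwise order. -/
def Clockwise (n : ℕ) (p q r s : ZMod (n + 3)) : Prop :=
  0 < (q - p).val ∧ (q - p).val < (r - p).val ∧ (r - p).val < (s - p).val

/-- The segments `{i j}` and `{k l}` cross: their endpoints interlace in cyclic order. -/
def Cross (n : ℕ) (i j k l : ZMod (n + 3)) : Prop :=
  Clockwise n i k j l ∨ Clockwise n i l j k

/-- `L(ℝ)`: the set of `ℝ`-tropical points of the cluster `A`-variety of type `Aₙ`
in its coordinate model: symmetric real functions on pairs of vertices, vanishing on
the diagonal and on edges, satisfying the tropical Plücker relations. -/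
structure TropPt (n : ℕ) where
  x : ZMod (n + 3) → ZMod (n + 3) → ℝ
  symm : ∀ i j, x i j = x j i
  diag_zero : ∀ i, x i i = 0
  edge_zero : ∀ i j, IsEdge n i j → x i j = 0
  pluecker : ∀ p q r s, Clockwise n p q r s →
    x p r + x q s = max (x p q + x r s) (x q r + x p s)

/-- A partial triangulation: a set of pairwise non-crossing diagonals. -/
structure PartialTri (n : ℕ) where
  diags : Finset (Sym2 (ZMod (n + 3)))
  mem_isDiag : ∀ i j, s(i, j) ∈ diags → IsDiag n i j
  noncross : ∀ i j k l, s(i, j) ∈ diags → s(k, l) ∈ diags → ¬ Cross n i j k l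

/-- The diagonal `{i j}` belongs to the supplement `S(T)`: it is not in `T` and
`T ∪ {i j}` is again a partial triangulation. -/
def InSupp (n : ℕ) (T : PartialTri n) (i j : ZMod (n + 3)) : Prop :=
  IsDiag n i j ∧ s(i, j) ∉ T.diags ∧
    ∀ k l, s(k, l) ∈ T.diags → ¬ Cross n i j k l ∧ ¬ Cross n k l i j

/-- The face `F_c^T` of a partial triangulation `T`. -/
def Face (n : ℕ) (T : PartialTri n) (c : ZMod (n + 3) → ZMod (n + 3) → ℝ) :
    Set (TropPt n) :=
  {x | (∀ i j, s(i, j) ∈ T.diags → x.x i j = c i j) ∧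
       (∀ i j, InSupp n T i j → x.x i j ≤ c i j)}

/-- The polytope `F_c^∅ = {x ∈ L(ℝ) : x_{ij} ≤ c_{ij} for all diagonals}`. -/
def TropPoly (n : ℕ) (c : ZMod (n + 3) → ZMod (n + 3) → ℝ) : Set (TropPt n) :=
  {x | ∀ i j, IsDiag n i j → x.x i j ≤ c i j}

/-- `F_c^∅` is a Stasheff polytope: faces reverse inclusions of partial triangulations. -/
def IsStasheff (n : ℕ) (c : ZMod (n + 3) → ZMod (n + 3) → ℝ) : Prop :=
  ∀ T₁ T₂ : PartialTri n, T₁.diags ⊆ T₂.diags → Face n T₂ c ⊆ Face n T₁ c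

/-- A tropicalized cluster monomial: `F(x) = Σ_{{ij}∈T} n_{ij} x_{ij}` for some complete
triangulation `T` and nonnegative integers `n_{ij}` (each unordered pair is counted once,
whence the factor `1/2` in the symmetric double sum). -/
def IsClusterMono (n : ℕ) (F : TropPt n → ℝ) : Prop :=
  ∃ (T : PartialTri n) (m : ZMod (n + 3) → ZMod (n + 3) → ℕ),
    T.diags.card = n ∧ (∀ i j, m i j = m j i) ∧
    (∀ i j, s(i, j) ∉ T.diags → m i j = 0) ∧
    ∀ x : TropPt n, F x =
      (1 / 2) * ∑ i : ZMod (n + 3), ∑ j : ZMod (n + 3), (m i j : ℝ) * x.x i j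

/-! ### Positions relative to a base vertex -/

/-- The position of `v` counted clockwise from the base vertex `o`. -/
def pos (n : ℕ) (o v : ZMod (n + 3)) : ℕ := (v - o).val

lemma pos_lt (n : ℕ) (o v : ZMod (n + 3)) : pos n o v < n + 3 := ZMod.val_lt _

lemma pos_self (n : ℕ) (o : ZMod (n + 3)) : pos n o o = 0 := by simp [pos]

lemma pos_add_natCast (n : ℕ) (o : ZMod (n + 3)) (m : ℕ) (hm : m < n + 3) :
    pos n o (o + m) = m := by
  simp only [pos, add_sub_cancel_left]
  exact ZMod.val_cast_of_lt hm

lemma base_add_pos (n : ℕ) (o v : ZMod (n + 3)) : o + ((pos n o v : ℕ) : ZMod (n + 3)) = v := by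
  simp [pos]

lemma pos_inj (n : ℕ) (o : ZMod (n + 3)) {v w : ZMod (n + 3)} (h : pos n o v = pos n o w) :
    v = w := by
  rw [← base_add_pos n o v, ← base_add_pos n o w, h]

lemma val_sub_pos (n : ℕ) (o p q : ZMod (n + 3)) :
    (q - p).val = if pos n o p ≤ pos n o q then pos n o q - pos n o p
      else pos n o q + (n + 3) - pos n o p := by
  have e : q - p = (q - o) - (p - o) := by ring
  have hp := pos_lt n o p
  have hq := pos_lt n o q
  split_ifs with h
  · rw [e, ZMod.val_sub h]; rfl
  · have : q - p = ((pos n o q + (n + 3) - pos n o p : ℕ) : ZMod (n + 3)) := by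
      rw [Nat.cast_sub (by omega)]
      simp [pos]
    rw [this, ZMod.val_cast_of_lt (by omega)]

lemma clockwise_iff (n : ℕ) (o p q r s : ZMod (n + 3)) :
    Clockwise n p q r s ↔
      (pos n o p < pos n o q ∧ pos n o q < pos n o r ∧ pos n o r < pos n o s) ∨
      (pos n o q < pos n o r ∧ pos n o r < pos n o s ∧ pos n o s < pos n o p) ∨
      (pos n o r < pos n o s ∧ pos n o s < pos n o p ∧ pos n o p < pos n o q) ∨
      (pos n o s < pos n o p ∧ pos n o p < pos n o q ∧ pos n o q < pos n o r) := by
  unfold Clockwise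
  rw [val_sub_pos n o p q, val_sub_pos n o p r, val_sub_pos n o p s]
  have := pos_lt n o p
  have := pos_lt n o q
  have := pos_lt n o r
  have := pos_lt n o s
  split_ifs <;> omega

lemma eq_add_one_iff (n : ℕ) (o p q : ZMod (n + 3)) :
    p = q + 1 ↔ pos n o p = pos n o q + 1 ∨ (pos n o p = 0 ∧ pos n o q = n + 2) := by
  have h1 : p = q + 1 ↔ (p - q).val = 1 := by
    have : (1 : ZMod (n + 3)).val = 1 := by
      have := ZMod.val_cast_of_lt (n := n + 3) (a := 1) (by omega)
      simpa using this
    rw [← sub_eq_iff_eq_add']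
    constructor
    · intro h; rw [h, this]
    · intro h; exact ZMod.val_injective _ (h.trans this.symm)
  rw [h1, val_sub_pos n o q p]
  have := pos_lt n o p
  have := pos_lt n o q
  split_ifs <;> omega

lemma isEdge_iff (n : ℕ) (o p q : ZMod (n + 3)) :
    IsEdge n p q ↔ pos n o p = pos n o q + 1 ∨ (pos n o p = 0 ∧ pos n o q = n + 2) ∨
      pos n o q = pos n o p + 1 ∨ (pos n o q = 0 ∧ pos n o p = n + 2) := by
  unfold IsEdge
  rw [eq_add_one_iff n o p q, eq_add_one_iff n o q p]
  tauto

lemma isDiag_iff (n : ℕ) (o p q : ZMod (n + 3)) :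
    IsDiag n p q ↔ pos n o p ≠ pos n o q ∧ ¬ (pos n o p = pos n o q + 1 ∨
      (pos n o p = 0 ∧ pos n o q = n + 2) ∨
      pos n o q = pos n o p + 1 ∨ (pos n o q = 0 ∧ pos n o p = n + 2)) := by
  unfold IsDiag
  rw [isEdge_iff n o p q]
  have : p = q ↔ pos n o p = pos n o q := ⟨fun h => h ▸ rfl, pos_inj n o⟩
  rw [Ne, this]

lemma IsDiag.symm {n : ℕ} {p q : ZMod (n + 3)} (h : IsDiag n p q) : IsDiag n q p :=
  ⟨h.1.symm, fun e => h.2 (Or.symm e)⟩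

lemma cross_iff (n : ℕ) (o p q a b : ZMod (n + 3)) :
    Cross n p q a b ↔
      (pos n o p < pos n o a ∧ pos n o a < pos n o q ∧
        (pos n o b < pos n o p ∨ pos n o q < pos n o b)) ∨
      (pos n o q < pos n o a ∧ pos n o a < pos n o p ∧
        (pos n o b < pos n o q ∨ pos n o p < pos n o b)) ∨
      (pos n o p < pos n o b ∧ pos n o b < pos n o q ∧
        (pos n o a < pos n o p ∨ pos n o q < pos n o a)) ∨
      (pos n o q < pos n o b ∧ pos n o b < pos n o p ∧
        (pos n o a < pos n o q ∨ pos n o p < pos n o a)) := by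
  unfold Cross
  rw [clockwise_iff n o p a q b, clockwise_iff n o p b q a]
  omega

lemma cross_comm (n : ℕ) (p q a b : ZMod (n + 3)) : Cross n p q a b ↔ Cross n a b p q := by
  rw [cross_iff n p, cross_iff n p a b]
  omega

lemma cross_swap (n : ℕ) (p q a b : ZMod (n + 3)) : Cross n p q a b ↔ Cross n p q b a := by
  unfold Cross
  tauto

/-! ### The inequalities imply the Stasheff property -/

lemma sides_cross (n : ℕ) (p k q l a b : ZMod (n + 3)) (h : Clockwise n p k q l)
    (hab : ¬ Cross n k l a b)
    (hc : Cross n p k a b ∨ Cross n q l a b ∨ Cross n k q a b ∨ Cross n p l a b) :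
    Cross n p q a b := by
  rw [clockwise_iff n p] at h
  rw [cross_iff n p] at hab ⊢
  rw [cross_iff n p, cross_iff n p, cross_iff n p, cross_iff n p] at hc
  rw [pos_self] at *
  obtain ⟨h1, h2, h3⟩ : 0 < pos n p k ∧ pos n p k < pos n p q ∧ pos n p q < pos n p l := by omega
  rcases hc with hc | hc | hc | hc <;> omega

lemma sides_not_cross (n : ℕ) (p k q l : ZMod (n + 3)) :
    ¬ Cross n p k k l ∧ ¬ Cross n q l k l ∧ ¬ Cross n k q k l ∧ ¬ Cross n p l k l := by
  simp only [cross_iff n p]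
  omega

open Classical in
/-- The diagonals of `T` crossing the segment `{p q}`. -/
noncomputable def crossSet (n : ℕ) (T : PartialTri n) (p q : ZMod (n + 3)) :
    Finset (Sym2 (ZMod (n + 3))) :=
  T.diags.filter fun e => ∃ a b, e = s(a, b) ∧ Cross n p q a b

open Classical in
lemma mem_crossSet (n : ℕ) (T : PartialTri n) (p q a b : ZMod (n + 3)) :
    s(a, b) ∈ crossSet n T p q ↔ s(a, b) ∈ T.diags ∧ Cross n p q a b := by
  unfold crossSet
  rw [Finset.mem_filter]
  refine and_congr_right fun _ => ⟨?_, fun h => ⟨a, b, rfl, h⟩⟩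
  rintro ⟨a', b', e, h⟩
  rcases Sym2.eq_iff.1 e with ⟨rfl, rfl⟩ | ⟨rfl, rfl⟩
  · exact h
  · exact (cross_swap ..).1 h

lemma card_crossSet_lt (n : ℕ) (T : PartialTri n) (p q k l u v : ZMod (n + 3))
    (hkl : s(k, l) ∈ T.diags) (hc : Cross n p q k l) (hn : ¬ Cross n u v k l)
    (hsub : ∀ a b, ¬ Cross n k l a b → Cross n u v a b → Cross n p q a b) :
    (crossSet n T u v).card < (crossSet n T p q).card := by
  apply Finset.card_lt_card
  refine Finset.ssubset_iff_of_subset ?_ |>.2 ⟨s(k, l), ?_, ?_⟩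
  · intro e
    induction e with | _ a b => ?_
    rw [mem_crossSet, mem_crossSet]
    exact fun h => ⟨h.1, hsub a b (T.noncross _ _ _ _ hkl h.1) h.2⟩
  · exact (mem_crossSet ..).2 ⟨hkl, hc⟩
  · exact fun h => hn ((mem_crossSet ..).1 h).2

/-- If `c` satisfies the tropical Plücker inequalities, a point of `F_c^T` is bounded by `c` on
every segment: the number of diagonals of `T` crossing the segment decreases when the segment is
replaced by a side of the quadrilateral it spans with a diagonal of `T` that it crosses. -/
lemma le_of_mem_face (n : ℕ) (c : ZMod (n + 3) → ZMod (n + 3) → ℝ)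
    (hdiag : ∀ i, c i i = 0)
    (hedge : ∀ i j, IsEdge n i j → c i j = 0)
    (hc : ∀ i k j l, Clockwise n i k j l →
        max (c i k + c j l) (c k j + c i l) ≤ c i j + c k l)
    (T : PartialTri n) (x : TropPt n) (hx : x ∈ Face n T c) (m : ℕ) :
    ∀ p q, (crossSet n T p q).card = m → x.x p q ≤ c p q := by
  induction m using Nat.strong_induction_on with | _ m ih => ?_
  intro p q hm
  by_cases hpq : p = q
  · rw [hpq, hdiag, x.diag_zero]
  by_cases he : IsEdge n p q
  · rw [hedge _ _ he, x.edge_zero _ _ he]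
  by_cases hT : s(p, q) ∈ T.diags
  · exact (hx.1 _ _ hT).le
  by_cases hX : ∃ k l, s(k, l) ∈ T.diags ∧ Cross n p q k l
  · obtain ⟨k, l, hkl, hcr, hcw⟩ : ∃ k l, s(k, l) ∈ T.diags ∧ Cross n p q k l ∧
        Clockwise n p k q l := by
      obtain ⟨k, l, hkl, hcr⟩ := hX
      rcases hcr with h | h
      · exact ⟨k, l, hkl, Or.inl h, h⟩
      · exact ⟨l, k, by rwa [Sym2.eq_swap], Or.inl h, h⟩
    obtain ⟨n1, n2, n3, n4⟩ := sides_not_cross n p k q l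
    have key : ∀ u v, ¬ Cross n u v k l →
        (∀ a b, ¬ Cross n k l a b → Cross n u v a b → Cross n p q a b) → x.x u v ≤ c u v :=
      fun u v h1 h2 =>
        ih _ (hm ▸ card_crossSet_lt n T p q k l u v hkl hcr h1 h2) u v rfl
    have b1 := key p k n1 fun a b h h' => sides_cross n p k q l a b hcw h (by tauto)
    have b2 := key q l n2 fun a b h h' => sides_cross n p k q l a b hcw h (by tauto)
    have b3 := key k q n3 fun a b h h' => sides_cross n p k q l a b hcw h (by tauto)
    have b4 := key p l n4 fun a b h h' => sides_cross n p k q l a b hcw h (by tauto)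
    have e1 := x.pluecker _ _ _ _ hcw
    have e2 := hc _ _ _ _ hcw
    have e3 := hx.1 _ _ hkl
    have e4 := max_le_max (add_le_add b1 b2) (add_le_add b3 b4)
    linarith
  · push Not at hX
    exact hx.2 _ _ ⟨⟨hpq, he⟩, hT, fun k l h =>
      ⟨hX k l h, fun h' => hX k l h ((cross_comm ..).1 h')⟩⟩

/-! ### Tropical points from the fan at one vertex -/

/-- `runMax h p d` is the maximum of `h` over the interval `p, …, p + d`. -/
noncomputable def runMax (h : ℕ → ℝ) (p : ℕ) : ℕ → ℝ
  | 0 => h p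
  | d + 1 => max (runMax h p d) (h (p + d + 1))

lemma runMax_split (h : ℕ → ℝ) (p d e : ℕ) :
    runMax h p (d + e + 1) = max (runMax h p d) (runMax h (p + d + 1) e) := by
  induction e with
  | zero => rfl
  | succ e ih =>
    rw [show d + (e + 1) + 1 = (d + e + 1) + 1 by ring, runMax, ih, runMax, max_assoc,
      show p + (d + e + 1) + 1 = p + d + 1 + e + 1 by ring]

/-- The tropical determinant for `p < q`, when position `0` sees position `m` with value `a m` and
all the sides `{m, m + 1}` with `1 ≤ m` have value `0`. It tropicalizes the classical formula
`Δ_{pq} = Δ_{0p} Δ_{0q} ∑_{p ≤ k < q} Δ_{k,k+1} / (Δ_{0k} Δ_{0,k+1})`. -/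
noncomputable def fanLt (a : ℕ → ℝ) (p q : ℕ) : ℝ :=
  if p = 0 then a q else a p + a q + runMax (fun k => -a k - a (k + 1)) p (q - p - 1)

/-- The symmetric extension of `fanLt`, with value `0` on the diagonal. -/
noncomputable def fan (a : ℕ → ℝ) (p q : ℕ) : ℝ :=
  if p < q then fanLt a p q else if q < p then fanLt a q p else 0

lemma fan_symm (a : ℕ → ℝ) (p q : ℕ) : fan a p q = fan a q p := by
  unfold fan
  split_ifs <;> first | rfl | omega

lemma fan_of_lt (a : ℕ → ℝ) {p q : ℕ} (h : p < q) : fan a p q = fanLt a p q := if_pos h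

lemma fan_zero (a : ℕ → ℝ) {q : ℕ} (h : 0 < q) : fan a 0 q = a q := by
  rw [fan_of_lt a h, fanLt, if_pos rfl]

lemma fan_succ (a : ℕ → ℝ) {p : ℕ} (h : 0 < p) : fan a p (p + 1) = 0 := by
  rw [fan_of_lt a (Nat.lt_succ_self p), fanLt, if_neg h.ne', show p + 1 - p - 1 = 0 by omega,
    runMax]
  ring

lemma runMax_split' (h : ℕ → ℝ) {p q r : ℕ} (hpq : p < q) (hqr : q < r) :
    runMax h p (r - p - 1) = max (runMax h p (q - p - 1)) (runMax h q (r - q - 1)) := by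
  have := runMax_split h p (q - p - 1) (r - q - 1)
  rwa [show q - p - 1 + (r - q - 1) + 1 = r - p - 1 by omega,
    show p + (q - p - 1) + 1 = q by omega] at this

lemma fan_pluecker (a : ℕ → ℝ) {p q r s : ℕ} (hpq : p < q) (hqr : q < r) (hrs : r < s) :
    fan a p r + fan a q s = max (fan a p q + fan a r s) (fan a q r + fan a p s) := by
  rw [fan_of_lt a hpq, fan_of_lt a hqr, fan_of_lt a hrs, fan_of_lt a (hpq.trans hqr),
    fan_of_lt a (hqr.trans hrs), fan_of_lt a (hpq.trans (hqr.trans hrs))]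
  have q0 : q ≠ 0 := by omega
  have r0 : r ≠ 0 := by omega
  by_cases hp : p = 0
  · simp only [fanLt, if_pos hp, if_neg q0, if_neg r0]
    rw [runMax_split' _ hqr hrs]
    simp only [max_def]
    split_ifs <;> linarith
  · simp only [fanLt, if_neg hp, if_neg q0, if_neg r0]
    rw [runMax_split' _ hqr hrs, runMax_split' _ hpq (hqr.trans hrs), runMax_split' _ hqr hrs,
      runMax_split' _ hpq hqr]
    simp only [max_def]
    split_ifs <;> linarith

/-- The tropical point whose values on the fan at the vertex `o` are given by `a`. -/
noncomputable def fanPt (n : ℕ) (o : ZMod (n + 3)) (a : ℕ → ℝ) (h1 : a 1 = 0)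
    (h2 : a (n + 2) = 0) : TropPt n where
  x v w := fan a (pos n o v) (pos n o w)
  symm _ _ := fan_symm ..
  diag_zero _ := by simp [fan]
  edge_zero v w h := by
    have key : ∀ p q, q = p + 1 ∨ (p = 0 ∧ q = n + 2) → fan a p q = 0 := by
      rintro p q (rfl | ⟨rfl, rfl⟩)
      · rcases Nat.eq_zero_or_pos p with rfl | hp
        · rw [fan_zero a (by omega), h1]
        · exact fan_succ a hp
      · rw [fan_zero a (by omega), h2]
    rw [isEdge_iff n o] at h
    rcases h with h | h | h | h
    · rw [fan_symm]; exact key _ _ (Or.inl h)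
    · exact key _ _ (Or.inr h)
    · exact key _ _ (Or.inl h)
    · rw [fan_symm]; exact key _ _ (Or.inr h)
  pluecker p q r s h := by
    rw [clockwise_iff n o] at h
    generalize pos n o p = P at *
    generalize pos n o q = Q at *
    generalize pos n o r = R at *
    generalize pos n o s = S at *
    rcases h with ⟨h1, h2, h3⟩ | ⟨h1, h2, h3⟩ | ⟨h1, h2, h3⟩ | ⟨h1, h2, h3⟩
    · exact fan_pluecker a h1 h2 h3
    · have := fan_pluecker a h1 h2 h3
      rw [fan_symm a R P, fan_symm a S P, fan_symm a Q P] at this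
      rw [add_comm, this, max_comm, add_comm (fan a P Q)]
    · have := fan_pluecker a h1 h2 h3
      rw [fan_symm a R P, fan_symm a S Q, fan_symm a S P, fan_symm a R Q] at this
      rw [this, add_comm (fan a P Q), add_comm (fan a Q R)]
    · have := fan_pluecker a h1 h2 h3
      rw [fan_symm a S Q, fan_symm a S P, fan_symm a S R] at this
      rw [add_comm, this, max_comm, add_comm (fan a Q R)]

/-! ### The double fan triangulation -/

/-- Fan coordinates at position `0` of the point which takes the values `C0 m` on `{0, m}` for
`J ≤ m` and `C1 m` on `{1, m}` for `2 ≤ m ≤ J`, where `C1 2 = 0`. Below `J` they are found by downward recursion from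
the Plücker relation for the positions `0, 1, m, m + 1`. -/
noncomputable def dblCoord (C0 C1 : ℕ → ℝ) (J m : ℕ) : ℝ :=
  if J ≤ m then C0 m
  else if m ≤ 1 then 0
  else max 0 (C1 m + dblCoord C0 C1 J (m + 1)) - C1 (m + 1)
termination_by J - m

lemma fan_one_dblCoord (C0 C1 : ℕ → ℝ) (J : ℕ) (hJ : 2 ≤ J) (hC : C1 2 = 0) :
    ∀ m, m + 2 ≤ J → fan (dblCoord C0 C1 J) 1 (m + 2) = C1 (m + 2) := by
  intro m
  induction m with
  | zero => intro _; rw [hC]; exact fan_succ _ one_pos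
  | succ m ih =>
    intro hm
    have e := fan_pluecker (dblCoord C0 C1 J) (p := 0) (q := 1) (r := m + 2) (s := m + 3)
      (by omega) (by omega) (by omega)
    rw [ih (by omega), fan_zero _ (by omega), fan_zero _ (by omega), fan_zero _ (by omega),
      fan_succ _ (by omega)] at e
    have e1 : dblCoord C0 C1 J 1 = 0 := by
      rw [dblCoord, if_neg (by omega), if_pos le_rfl]
    have e2 : dblCoord C0 C1 J (m + 2) =
        max 0 (C1 (m + 2) + dblCoord C0 C1 J (m + 3)) - C1 (m + 3) := by
      rw [dblCoord, if_neg (by omega), if_neg (by omega)]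
    rw [e1, e2, add_zero] at e
    change fan _ 1 (m + 3) = C1 (m + 3)
    linarith

open Classical in
/-- The triangulation consisting of the diagonals from position `1` to positions at most `J` and
from position `0` to positions at least `J`. -/
noncomputable def dblTri (n : ℕ) (o : ZMod (n + 3)) (J : ℕ) : PartialTri n where
  diags := Finset.univ.filter fun e => ∃ v w, e = s(v, w) ∧ IsDiag n v w ∧
    ((pos n o v = 1 ∧ pos n o w ≤ J) ∨ (pos n o v = 0 ∧ J ≤ pos n o w))
  mem_isDiag v w h := by
    obtain ⟨v', w', e, hd, -⟩ := (Finset.mem_filter_univ _).1 h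
    rcases Sym2.eq_iff.1 e with ⟨rfl, rfl⟩ | ⟨rfl, rfl⟩
    · exact hd
    · exact hd.symm
  noncross v w v' w' h h' := by
    obtain ⟨a, b, e, hd, hab⟩ := (Finset.mem_filter_univ _).1 h
    obtain ⟨a', b', e', hd', hab'⟩ := (Finset.mem_filter_univ _).1 h'
    rw [isDiag_iff n o] at hd hd'
    rw [cross_iff n o]
    rcases Sym2.eq_iff.1 e with ⟨rfl, rfl⟩ | ⟨rfl, rfl⟩ <;>
    rcases Sym2.eq_iff.1 e' with ⟨rfl, rfl⟩ | ⟨rfl, rfl⟩ <;> omega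

open Classical in
lemma mem_dblTri (n : ℕ) (o : ZMod (n + 3)) (J : ℕ) (v w : ZMod (n + 3)) :
    s(v, w) ∈ (dblTri n o J).diags ↔ IsDiag n v w ∧
      (((pos n o v = 1 ∧ pos n o w ≤ J) ∨ (pos n o v = 0 ∧ J ≤ pos n o w)) ∨
       ((pos n o w = 1 ∧ pos n o v ≤ J) ∨ (pos n o w = 0 ∧ J ≤ pos n o v))) := by
  constructor
  · intro h
    obtain ⟨v', w', e, hd, h⟩ := (Finset.mem_filter_univ _).1 h
    rcases Sym2.eq_iff.1 e with ⟨rfl, rfl⟩ | ⟨rfl, rfl⟩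
    · exact ⟨hd, Or.inl h⟩
    · exact ⟨hd.symm, Or.inr h⟩
  · rintro ⟨hd, h | h⟩
    · exact (Finset.mem_filter_univ _).2 ⟨v, w, rfl, hd, h⟩
    · exact (Finset.mem_filter_univ _).2 ⟨w, v, Sym2.eq_swap, hd.symm, h⟩

/-- The double fan triangulation is maximal. -/
lemma not_inSupp_dblTri (n : ℕ) (o : ZMod (n + 3)) (J : ℕ) (h2 : 2 ≤ J) (hJ : J ≤ n + 1)
    (v w : ZMod (n + 3)) : ¬ InSupp n (dblTri n o J) v w := by
  rintro ⟨hd, hmem, hcr⟩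
  wlog hlt : pos n o v < pos n o w generalizing v w with H
  · refine H w v hd.symm (by rwa [Sym2.eq_swap]) (fun k l h => ?_) ?_
    · rw [cross_comm n w v, cross_swap n k l w v, cross_comm n k l]
      have := hcr k l h
      rw [cross_comm n k l] at this
      exact this
    · have : pos n o v ≠ pos n o w := ((isDiag_iff n o v w).1 hd).1
      omega
  -- It suffices to exhibit a crossing member `{x, y}` by its positions.
  have key : ∀ x y : ℕ, ∀ hx : x < n + 3, ∀ hy : y < n + 3,
      ((x = 1 ∧ 3 ≤ y ∧ y ≤ J) ∨ (x = 0 ∧ J ≤ y ∧ y ≤ n + 1)) →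
      ¬ (pos n o v < y ∧ y < pos n o w ∧ (x < pos n o v ∨ pos n o w < x) ∨
        pos n o v < x ∧ x < pos n o w ∧ (y < pos n o v ∨ pos n o w < y)) := by
    intro x y hx hy h hc
    have := (hcr (o + x) (o + y) ((mem_dblTri ..).2 ?_)).1
    · apply this
      rw [cross_iff n o, pos_add_natCast n o x hx, pos_add_natCast n o y hy]
      omega
    · rw [isDiag_iff n o, pos_add_natCast n o x hx, pos_add_natCast n o y hy]
      omega
  rw [mem_dblTri] at hmem
  have hd' := hd
  rw [isDiag_iff n o] at hd'
  have hw := pos_lt n o w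
  have hmem' : ¬ (((pos n o v = 1 ∧ pos n o w ≤ J) ∨ (pos n o v = 0 ∧ J ≤ pos n o w)) ∨
       ((pos n o w = 1 ∧ pos n o v ≤ J) ∨ (pos n o w = 0 ∧ J ≤ pos n o v))) :=
    fun h => hmem ⟨hd, h⟩
  generalize pos n o v = V at *
  generalize pos n o w = W at *
  clear hmem hcr
  rcases Nat.lt_or_ge J W with hJW | hJW
  · rcases Nat.lt_or_ge V J with hV | hV
    · have := key 0 J (by omega) (by omega) (by omega)
      omega
    · have := key 0 (V + 1) (by omega) (by omega) (by omega)
      omega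
  · rcases Nat.eq_zero_or_pos V with hV | hV
    · have := key 1 J (by omega) (by omega) (by omega)
      omega
    · have := key 1 (V + 1) (by omega) (by omega) (by omega)
      omega

/-! ### The Stasheff property implies the inequalities -/

/-- The Plücker inequality for the quadrilateral spanned by two disjoint sides. -/
lemma local_ineq (n : ℕ) (c : ZMod (n + 3) → ZMod (n + 3) → ℝ)
    (hsym : ∀ i j, c i j = c j i)
    (hedge : ∀ i j, IsEdge n i j → c i j = 0) (hS : IsStasheff n c)
    (o : ZMod (n + 3)) (J : ℕ) (h2 : 2 ≤ J) (hJ : J ≤ n + 1) :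
    c (o + 1) (o + J) + c o (o + J + 1) ≤ c o (o + J) + c (o + 1) (o + J + 1) := by
  set C0 : ℕ → ℝ := fun m => c o (o + m) with hC0
  set C1 : ℕ → ℝ := fun m => c (o + 1) (o + m) with hC1
  set a := dblCoord C0 C1 J with ha
  have hpos : ∀ m : ℕ, m < n + 3 → pos n o (o + m) = m := pos_add_natCast n o
  have hpos0 : pos n o o = 0 := pos_self n o
  have hpos1 : pos n o (o + 1) = 1 := by simpa using hpos 1 (by omega)
  have hposJ : pos n o (o + J) = J := hpos J (by omega)
  have hposJ' : pos n o (o + J + 1) = J + 1 := by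
    have := hpos (J + 1) (by omega)
    rwa [Nat.cast_add, Nat.cast_one, ← add_assoc] at this
  have ha1 : a 1 = 0 := by
    rw [ha, dblCoord, if_neg (by omega), if_pos le_rfl]
  have haJ : ∀ m, J ≤ m → a m = C0 m := fun m hm => by rw [ha, dblCoord, if_pos hm]
  have ha2 : a (n + 2) = 0 := by
    rw [haJ _ (by omega)]
    apply hedge
    rw [isEdge_iff n o, hpos0, hpos (n + 2) (by omega)]
    omega
  have hC2 : C1 2 = 0 := by
    apply hedge
    rw [isEdge_iff n o, hpos1, hpos 2 (by omega)]
    omega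
  have hfan0 : ∀ m, J ≤ m → fan a 0 m = C0 m := fun m hm => by
    rw [fan_zero a (by omega), haJ m hm]
  have hfan1 : ∀ m, 2 ≤ m → m ≤ J → fan a 1 m = C1 m := fun m hm hm' => by
    obtain ⟨m, rfl⟩ := Nat.exists_eq_add_of_le' hm
    exact fan_one_dblCoord C0 C1 J h2 hC2 m hm'
  set x := fanPt n o a ha1 ha2 with hx
  have hval : ∀ v w, x.x v w = fan a (pos n o v) (pos n o w) := fun _ _ => rfl
  have hsub : ∀ v w, IsDiag n v w →
      ((pos n o v = 1 ∧ pos n o w ≤ J) ∨ (pos n o v = 0 ∧ J ≤ pos n o w)) →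
      x.x v w = c v w := by
    intro v w hd h
    rw [isDiag_iff n o] at hd
    rw [hval]
    rcases h with ⟨hv, hw⟩ | ⟨hv, hw⟩
    · have hv' : v = o + 1 := pos_inj n o (by rw [hv, hpos1])
      rw [hv, hfan1 _ (by omega) hw, hv']
      simp only [hC1, base_add_pos]
    · have hv' : v = o := pos_inj n o (by rw [hv, hpos0])
      rw [hv, hfan0 _ hw, hv']
      simp only [hC0, base_add_pos]
  have hmem : x ∈ Face n (dblTri n o J) c := by
    refine ⟨fun v w h => ?_, fun v w h => absurd h (not_inSupp_dblTri n o J h2 hJ v w)⟩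
    obtain ⟨hd, h | h⟩ := (mem_dblTri ..).1 h
    · exact hsub v w hd h
    · rw [x.symm, hsym, hsub w v hd.symm h]
  have hle := (hS ⟨∅, by simp, by simp⟩ (dblTri n o J) (by simp) hmem).2 (o + 1) (o + J + 1)
    ⟨by rw [isDiag_iff n o, hpos1, hposJ']; omega, by simp, by simp⟩
  have hp := x.pluecker o (o + 1) (o + J) (o + J + 1) (by
    rw [clockwise_iff n o, hpos0, hpos1, hposJ, hposJ']; omega)
  rw [hval o (o + J), hval (o + 1) (o + J), hval o (o + J + 1), hpos0, hpos1, hposJ, hposJ',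
    hfan0 J le_rfl, hfan0 (J + 1) (by omega), hfan1 J h2 le_rfl] at hp
  have := le_max_right (x.x o (o + 1) + x.x (o + J) (o + J + 1)) (C1 J + C0 (J + 1))
  rw [← hp] at this
  simp only [hC0, hC1, Nat.cast_add, Nat.cast_one, ← add_assoc] at this
  linarith

/-- Telescoping of local Monge inequalities over a rectangle. -/
lemma monge (g : ℕ → ℕ → ℝ) (N : ℕ)
    (h : ∀ a b, a + 1 < b → b + 1 < a + N →
      g (a + 1) b + g a (b + 1) ≤ g a b + g (a + 1) (b + 1)) (u v d : ℕ) (huv : u < v)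
    (hw : v + d < N) : g u v + g 0 (v + d) ≤ g 0 v + g u (v + d) := by
  have row : ∀ a, a < u → g (a + 1) v + g a (v + d) ≤ g a v + g (a + 1) (v + d) := by
    intro a ha
    induction d with
    | zero => simp [add_comm]
    | succ d ih =>
      have := ih (by omega)
      have := h a (v + d) (by omega) (by omega)
      rw [← add_assoc]
      linarith
  clear huv
  induction u with
  | zero => simp
  | succ u ih =>
    have := ih fun a ha => row a (by omega)
    have := row u (by omega)
    linarith

lemma half_ineq (n : ℕ) (c : ZMod (n + 3) → ZMod (n + 3) → ℝ)
    (hsym : ∀ i j, c i j = c j i)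
    (hedge : ∀ i j, IsEdge n i j → c i j = 0) (hS : IsStasheff n c)
    (i k j l : ZMod (n + 3)) (h : Clockwise n i k j l) :
    c k j + c i l ≤ c i j + c k l := by
  rw [clockwise_iff n i, pos_self] at h
  have hl := pos_lt n i l
  have := monge (fun a b => c (i + a) (i + b)) (n + 3) (fun a b h1 h2 => by
    have := local_ineq n c hsym hedge hS (i + a) (b - a) (by omega) (by omega)
    have e : i + (a : ZMod (n + 3)) + ((b - a : ℕ) : ZMod (n + 3)) = i + b := by
      rw [Nat.cast_sub (by omega)]; ring
    rw [e] at this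
    simpa [add_assoc] using this) (pos n i k) (pos n i j) (pos n i l - pos n i j) (by omega)
    (by omega)
  rw [show pos n i j + (pos n i l - pos n i j) = pos n i l by omega] at this
  simpa [base_add_pos] using this

/-- Criterion for Stasheff polytopes: with `c` symmetric, vanishing on edges and on
the diagonal, `F_c^∅` is a Stasheff polytope if and only if
`c_{ij} + c_{kl} ≥ max(c_{ik} + c_{jl}, c_{kj} + c_{il})` for every quadruple of
distinct vertices `i, k, j, l` in clockwise order. -/
theorem isStasheff_iff_tropical_pluecker_ineq
    (n : ℕ) (hn : 1 ≤ n) (c : ZMod (n + 3) → ZMod (n + 3) → ℝ)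
    (hsym : ∀ i j, c i j = c j i)
    (hdiag : ∀ i, c i i = 0)
    (hedge : ∀ i j, IsEdge n i j → c i j = 0) :
    IsStasheff n c ↔
      ∀ i k j l, Clockwise n i k j l →
        max (c i k + c j l) (c k j + c i l) ≤ c i j + c k l := by
  constructor
  · intro hS i k j l h
    -- The first half of the maximum comes from the rotated quadruple `k, j, l, i`.
    apply max_le
    · have h' : Clockwise n k j l i := by
        rw [clockwise_iff n i] at h ⊢
        omega
      have := half_ineq n c hsym hedge hS k j l i h'
      rw [hsym k i, hsym j i] at this
      linarith
    · exact half_ineq n c hsym hedge hS i k j l h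
  · intro hc T₁ T₂ hT x hx
    exact ⟨fun i j h => hx.1 i j (hT h), fun i j _ =>
      le_of_mem_face n c hdiag hedge hc T₂ x hx _ i j rfl⟩
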